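/- Suppose 1 ≤ i ≤ n−2, w_i = w_{i+1} and w_i ≠ w_{i+2}. Let τ := s_i s_{i+1} s_i, which exchanges the i-th and (i+2)-nd entries of k̲ and of w̲, and let Z := {((L_•),(L'_•)) ∈ Y(k̲)_w̲ × Y(τ·k̲)_{τ·w̲} : L_j = L'_j for all j ∉ {i, i+1}}. Then the map sending ((L_•),(L'_•)) ∈ Z to ((L_•),(M_•)), where M_j = L_j for j ≠ i and M_i = {x ∈ L'_{i+1} : (z − w_i)·x ∈ L_{i−1}}, is a well-defined bijection from Z onto Z(k̲)^i_w̲. -/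

import Mathlib

open Polynomial

set_option synthInstance.maxHeartbeats 1000000
set_option maxHeartbeats 1000000

noncomputable section

abbrev KM (m : ℕ) := Fin m → RatFunc ℂ

abbrev SubM (m : ℕ) := Submodule (Polynomial ℂ) (KM m)

def polyL0 (m : ℕ) : SubM m :=
  Submodule.pi Set.univ fun _ => LinearMap.range (Algebra.linearMap (Polynomial ℂ) (RatFunc ℂ))

abbrev QuotMod (m : ℕ) (A B : SubM m) := ↥B ⧸ (A.comap B.subtype)

def fdim (m : ℕ) (A B : SubM m) : ℕ := Module.finrank ℂ (QuotMod m A B)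

def zmul (m : ℕ) (w : ℂ) : KM m →ₗ[Polynomial ℂ] KM m :=
  (Polynomial.X - Polynomial.C w) • LinearMap.id

def quotSmul (m : ℕ) (p : Polynomial ℂ) (A B : SubM m) :
    QuotMod m A B →ₗ[ℂ] QuotMod m A B where
  toFun v := p • v
  map_add' x y := smul_add p x y
  map_smul' c x := smul_comm p c x

def IsYChain (m n : ℕ) (k : ℕ → ℕ) (w : ℕ → ℂ) (L : ℕ → SubM m) : Prop :=
  L 0 = polyL0 m ∧
  (∀ i < n, L i ≤ L (i + 1)) ∧
  (∀ i < n, FiniteDimensional ℂ (QuotMod m (L i) (L (i + 1)))) ∧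
  (∀ i < n, fdim m (L i) (L (i + 1)) = k (i + 1)) ∧
  (∀ i < n, ∀ x ∈ L (i + 1), zmul m (w (i + 1)) x ∈ L i)

/-- `s_i` : exchanging the `i`-th and `(i+1)`-st entries of a sequence. -/
def swapAt {α : Type*} (i : ℕ) (f : ℕ → α) : ℕ → α :=
  fun j => if j = i then f (i + 1) else if j = i + 1 then f i else f j

/-- `τ = s_i s_{i+1} s_i` : exchanging the `i`-th and `(i+2)`-nd entries of a sequence. -/
def swap2At {α : Type*} (i : ℕ) (f : ℕ → α) : ℕ → α :=
  fun j => if j = i then f (i + 2) else if j = i + 2 then f i else f j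

/-- The correspondence `Z(k)^i_w ⊆ Y(k)_w × Y(s_i·k)_{s_i·w}`. -/
def IsZPair (m n i : ℕ) (k : ℕ → ℕ) (w : ℕ → ℂ) (L L' : ℕ → SubM m) : Prop :=
  IsYChain m n k w L ∧ IsYChain m n (swapAt i k) (swapAt i w) L' ∧
  ∀ j, j ≠ i → L j = L' j

/-- The correspondence `Z ⊆ Y(k)_w × Y(τ·k)_{τ·w}` consisting of pairs of chains that
agree except possibly in positions `i` and `i+1`. -/
def IsZBigPair (m n i : ℕ) (k : ℕ → ℕ) (w : ℕ → ℂ) (L L' : ℕ → SubM m) : Prop :=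
  IsYChain m n k w L ∧ IsYChain m n (swap2At i k) (swap2At i w) L' ∧
  ∀ j, j ≠ i → j ≠ i + 1 → L j = L' j

/-- The chain `M` with `M_j = L_j` for `j ≠ i` and
`M_i = {x ∈ L'_{i+1} : (z - w_i)·x ∈ L_{i-1}}`. -/
def tChain (m i : ℕ) (w : ℕ → ℂ) (L L' : ℕ → SubM m) : ℕ → SubM m :=
  fun j => if j = i then L' (i + 1) ⊓ (L (i - 1)).comap (zmul m (w i)) else L j

/-!
Modulo `N = L_{i-1}`, the submodule `T = L_{i+2}` splits into coprime parts: `U = L_{i+1}` is the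
part killed by `(z - w_i)(z - w_{i+1})` and `B = L'_i` the part killed by `z - w_{i+2}`, so that
`U ⊓ B = N` and `U ⊔ B = T`. Hence `B` is determined by `N` and `T`, and the diamond isomorphism
`M ↦ M ⊔ B`, with inverse `P ↦ U ⊓ P`, identifies the choices of `M_i` in `[N, U]` with the choices
of `L'_{i+1}` in `[B, T]`. The second isomorphism theorem matches the successive quotients, and the
formula defining `M_i` is just another description of `U ⊓ L'_{i+1}`.
-/

section RelativeTorsion

variable {A V : Type*} [CommRing A] [AddCommGroup V] [Module A V]

/-- The submodule `{x ∈ T : a • x ∈ N}` of `T`, which for `N ≤ T` is the preimage in `T` of the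
`a`-torsion of `T / N`. -/
def torsionOver (a : A) (N T : Submodule A V) : Submodule A V :=
  T ⊓ N.comap (LinearMap.lsmul A V a)

theorem mem_torsionOver {a : A} {N T : Submodule A V} {x : V} :
    x ∈ torsionOver a N T ↔ x ∈ T ∧ a • x ∈ N :=
  Iff.rfl

theorem eq_smul_add_smul_of_mul_add_mul_eq_one {u r v q : A} (h : u * r + v * q = 1) (x : V) :
    x = u • r • x + v • q • x := by
  rw [smul_smul, smul_smul, ← add_smul, h, one_smul]

theorem mem_of_isCoprime_of_smul_mem {r q : A} (hrq : IsCoprime r q) {N : Submodule A V} {x : V}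
    (hr : r • x ∈ N) (hq : q • x ∈ N) : x ∈ N := by
  obtain ⟨u, v, huv⟩ := hrq
  rw [eq_smul_add_smul_of_mul_add_mul_eq_one huv x]
  exact N.add_mem (N.smul_mem u hr) (N.smul_mem v hq)

/-- For `N ≤ U ≤ T` and coprime `r` and `q`: the quotient `U / N` is killed by `r` and `T / U` is
killed by `q`, so that `U / N` is the `r`-torsion part of the splitting of `T / N`. -/
structure IsCoprimePart (r q : A) (N T U : Submodule A V) : Prop where
  isCoprime : IsCoprime r q
  le_part : N ≤ U
  part_le : U ≤ T
  smul_mem_base : ∀ x ∈ U, r • x ∈ N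
  smul_mem_part : ∀ x ∈ T, q • x ∈ U

namespace IsCoprimePart

variable {r q : A} {N T U B : Submodule A V}

theorem eq_torsionOver (hU : IsCoprimePart r q N T U) : U = torsionOver r N T := by
  refine le_antisymm (fun x hx => ⟨hU.part_le hx, hU.smul_mem_base x hx⟩) fun x hx => ?_
  exact mem_of_isCoprime_of_smul_mem hU.isCoprime (hU.le_part hx.2) (hU.smul_mem_part x hx.1)

theorem compl_torsionOver (hU : IsCoprimePart r q N T U) :
    IsCoprimePart q r N T (torsionOver q N T) where
  isCoprime := hU.isCoprime.symm
  le_part _ hx := ⟨hU.part_le (hU.le_part hx), N.smul_mem q hx⟩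
  part_le := inf_le_left
  smul_mem_base _ hx := hx.2
  smul_mem_part x hx := by
    refine mem_torsionOver.2 ⟨T.smul_mem r hx, ?_⟩
    rw [smul_comm]
    exact hU.smul_mem_base _ (hU.smul_mem_part x hx)

theorem inf_eq (hU : IsCoprimePart r q N T U) (hB : IsCoprimePart q r N T B) : U ⊓ B = N :=
  le_antisymm
    (fun x hx => mem_of_isCoprime_of_smul_mem hU.isCoprime (hU.smul_mem_base x hx.1)
      (hB.smul_mem_base x hx.2))
    (le_inf hU.le_part hB.le_part)

theorem sup_eq (hU : IsCoprimePart r q N T U) (hB : IsCoprimePart q r N T B) : U ⊔ B = T := by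
  refine le_antisymm (sup_le hU.part_le hB.part_le) fun x hx => ?_
  obtain ⟨u, v, huv⟩ := hU.isCoprime
  rw [eq_smul_add_smul_of_mul_add_mul_eq_one huv x]
  exact add_mem (Submodule.mem_sup_right (B.smul_mem u (hB.smul_mem_part x hx)))
    (Submodule.mem_sup_left (U.smul_mem v (hU.smul_mem_part x hx)))

theorem inf_left_sup_eq (hU : IsCoprimePart r q N T U) (hB : IsCoprimePart q r N T B)
    {P : Submodule A V} (hP : P ∈ Set.Icc B T) : U ⊓ P ⊔ B = P := by
  rw [sup_comm, ← sup_inf_assoc_of_le U hP.1, sup_comm, hU.sup_eq hB,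
    inf_eq_right.2 hP.2]

theorem inf_sup_right_eq (hU : IsCoprimePart r q N T U) (hB : IsCoprimePart q r N T B)
    {M : Submodule A V} (hM : M ∈ Set.Icc N U) : U ⊓ (M ⊔ B) = M := by
  rw [inf_comm, sup_inf_assoc_of_le B hM.2, inf_comm, hU.inf_eq hB, sup_eq_left.2 hM.1]

theorem torsionOver_eq_inf (hU : IsCoprimePart r q N T U) (hB : IsCoprimePart q r N T B) {p : A}
    (hpr : p ∣ r) {P : Submodule A V} (hPT : P ≤ T) (hpP : ∀ x ∈ P, p • x ∈ B) :
    torsionOver p N P = U ⊓ P := by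
  ext x
  constructor
  · rintro ⟨hxP, hpx⟩
    obtain ⟨c, rfl⟩ := hpr
    refine ⟨?_, hxP⟩
    rw [hU.eq_torsionOver, SetLike.mem_coe, mem_torsionOver, mul_comm, mul_smul]
    exact ⟨hPT hxP, N.smul_mem c hpx⟩
  · rintro ⟨hxU, hxP⟩
    refine mem_torsionOver.2 ⟨hxP, ?_⟩
    rw [← hU.inf_eq hB]
    exact ⟨U.smul_mem p hxU, hpP x hxP⟩

end IsCoprimePart

end RelativeTorsion

section Modification

variable (F : Type*) {A V : Type*} [CommRing F] [CommRing A] [Algebra F A] [AddCommGroup V]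
  [Module F V] [Module A V] [IsScalarTower F A V]

/-- An elementary modification `N ≤ M`: the quotient `M / N` is killed by `p` and is finite over `F`
of rank `d`. -/
structure IsModification (p : A) (d : ℕ) (N M : Submodule A V) : Prop where
  le : N ≤ M
  smul_mem : ∀ x ∈ M, p • x ∈ N
  finite : Module.Finite F (M ⧸ N.submoduleOf M)
  finrank_eq : Module.finrank F (M ⧸ N.submoduleOf M) = d

variable {F} {p p₁ p₂ q : A} {d d₁ d₂ d₃ : ℕ} {N U B T L₁ L₂ L₃ : Submodule A V}

theorem isModification_iff_of_inf_eq_of_sup_eq (hinf : U ⊓ B = N) (hsup : U ⊔ B = T) :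
    IsModification F p d N U ↔ IsModification F p d B T := by
  subst hinf hsup
  let e : (U ⧸ (U ⊓ B).submoduleOf U) ≃ₗ[F] ((U ⊔ B : Submodule A V) ⧸ B.submoduleOf (U ⊔ B)) :=
    (LinearMap.quotientInfEquivSupQuotient U B).restrictScalars F
  constructor
  · rintro ⟨-, hp, hfin, hd⟩
    refine ⟨le_sup_right, fun x hx => ?_, Module.Finite.equiv e, e.finrank_eq.symm.trans hd⟩
    obtain ⟨u, hu, b, hb, rfl⟩ := Submodule.mem_sup.1 hx
    rw [smul_add]
    exact B.add_mem (hp u hu).2 (B.smul_mem p hb)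
  · rintro ⟨-, hp, hfin, hd⟩
    exact ⟨inf_le_left, fun x hx => ⟨U.smul_mem p hx, hp x (Submodule.mem_sup_left hx)⟩,
      Module.Finite.equiv e.symm, e.finrank_eq.trans hd⟩

namespace IsModification

theorem mul_smul_mem (h₁ : IsModification F p₁ d₁ N L₁) (h₂ : IsModification F p₂ d₂ L₁ L₂) :
    ∀ x ∈ L₂, (p₁ * p₂) • x ∈ N := fun x hx => by
  rw [mul_smul]
  exact h₁.smul_mem _ (h₂.smul_mem x hx)

theorem isCoprimePart_snd (hc : IsCoprime (p₁ * p₂) q) (h₁ : IsModification F p₁ d₁ N L₁)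
    (h₂ : IsModification F p₂ d₂ L₁ L₂) (h₃ : IsModification F q d₃ L₂ L₃) :
    IsCoprimePart (p₁ * p₂) q N L₃ L₂ :=
  ⟨hc, h₁.le.trans h₂.le, h₃.le, h₁.mul_smul_mem h₂, h₃.smul_mem⟩

theorem isCoprimePart_fst (hc : IsCoprime q (p₁ * p₂)) (h₁ : IsModification F q d₁ N L₁)
    (h₂ : IsModification F p₁ d₂ L₁ L₂) (h₃ : IsModification F p₂ d₃ L₂ L₃) :
    IsCoprimePart q (p₁ * p₂) N L₃ L₁ :=
  ⟨hc, h₁.le, h₂.le.trans h₃.le, h₁.smul_mem, h₂.mul_smul_mem h₃⟩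

end IsModification

end Modification

section Chains

variable (F : Type*) {A V : Type*} [CommRing F] [CommRing A] [Algebra F A] [AddCommGroup V]
  [Module F V] [Module A V] [IsScalarTower F A V]

/-- The analogue of `Y(k)_w` over an arbitrary base `N₀`, with elements `p_j` of the coefficient
ring in place of `z - w_j`. As in `IsYChain`, the terms of `L` beyond `n` are unconstrained. -/
structure IsModificationChain (N₀ : Submodule A V) (n : ℕ) (k : ℕ → ℕ) (p : ℕ → A)
    (L : ℕ → Submodule A V) : Prop where
  zero_eq : L 0 = N₀
  isModification : ∀ j < n, IsModification F (p (j + 1)) (k (j + 1)) (L j) (L (j + 1))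

/-- The analogue of `Z(k)^i_w` for `IsModificationChain`: pairs of chains, of types `(k, p)` and
`s_i · (k, p)`, that agree except possibly in position `i`. -/
def swapPairs (N₀ : Submodule A V) (n : ℕ) (k : ℕ → ℕ) (p : ℕ → A) (i : ℕ) :
    Set ((ℕ → Submodule A V) × (ℕ → Submodule A V)) :=
  {x | IsModificationChain F N₀ n k p x.1 ∧
    IsModificationChain F N₀ n (swapAt i k) (swapAt i p) x.2 ∧ ∀ j, j ≠ i → x.1 j = x.2 j}

/-- The analogue of `Z` for `IsModificationChain`: pairs of chains, of types `(k, p)` and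
`τ · (k, p)`, that agree except possibly in positions `i` and `i + 1`. -/
def swap2Pairs (N₀ : Submodule A V) (n : ℕ) (k : ℕ → ℕ) (p : ℕ → A) (i : ℕ) :
    Set ((ℕ → Submodule A V) × (ℕ → Submodule A V)) :=
  {x | IsModificationChain F N₀ n k p x.1 ∧
    IsModificationChain F N₀ n (swap2At i k) (swap2At i p) x.2 ∧
    ∀ j, j ≠ i → j ≠ i + 1 → x.1 j = x.2 j}

/-- The map `(L, L') ↦ (L, M)` with `M_j = L_j` for `j ≠ i` and
`M_i = {x ∈ L'_{i+1} : p_{i+1} • x ∈ L_{i-1}}`. The multiplier is `p_{i+1}`, the type of the step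
`L'_i ≤ L'_{i+1}`; for `p_i = p_{i+1}` the map is that of `tChain`. -/
def toSwapPair (p : ℕ → A) (i : ℕ) (x : (ℕ → Submodule A V) × (ℕ → Submodule A V)) :
    (ℕ → Submodule A V) × (ℕ → Submodule A V) :=
  (x.1, Function.update x.1 i (torsionOver (p (i + 1)) (x.1 (i - 1)) (x.2 (i + 1))))

variable {F} {N₀ : Submodule A V} {n i : ℕ} {k k' : ℕ → ℕ} {p p' : ℕ → A}
  {L L' : ℕ → Submodule A V}

theorem IsModificationChain.iff_of_eq_off {a b : ℕ} (hb : b ≤ n)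
    (hL : IsModificationChain F N₀ n k p L) (hLL' : ∀ j, j ≤ a ∨ b ≤ j → L j = L' j)
    (hk : ∀ j, j ≤ a ∨ b < j → k' j = k j) (hp : ∀ j, j ≤ a ∨ b < j → p' j = p j) :
    IsModificationChain F N₀ n k' p' L' ↔
      ∀ j, a ≤ j → j < b → IsModification F (p' (j + 1)) (k' (j + 1)) (L' j) (L' (j + 1)) := by
  refine ⟨fun h j _ hj => h.isModification j (hj.trans_le hb), fun h => ⟨?_, fun j hj => ?_⟩⟩
  · rw [← hLL' 0 (.inl a.zero_le), hL.zero_eq]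
  · by_cases hab : a ≤ j ∧ j < b
    · exact h j hab.1 hab.2
    · rw [hk _ (by lia), hp _ (by lia), ← hLL' j (by lia), ← hLL' (j + 1) (by lia)]
      exact hL.isModification j hj

theorem mem_swapPairs_succ (hin : i + 2 ≤ n) :
    (L, L') ∈ swapPairs F N₀ n k p (i + 1) ↔
      IsModificationChain F N₀ n k p L ∧ (∀ j, j ≠ i + 1 → L j = L' j) ∧
        IsModification F (p (i + 2)) (k (i + 2)) (L i) (L' (i + 1)) ∧
        IsModification F (p (i + 1)) (k (i + 1)) (L' (i + 1)) (L (i + 2)) := by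
  refine and_congr_right fun hL => and_comm.trans (and_congr_right fun hLL' => ?_)
  rw [hL.iff_of_eq_off (a := i) hin (fun j hj => hLL' j (by lia))
    (fun j _ => by grind [swapAt]) (fun j _ => by grind [swapAt]),
    show L i = L' i from hLL' i (by lia), show L (i + 2) = L' (i + 2) from hLL' (i + 2) (by lia)]
  have hIco : ∀ j, i ≤ j ∧ j < i + 2 ↔ j = i ∨ j = i + 1 := by lia
  simp only [← and_imp, hIco, forall_eq_or_imp, forall_eq]
  simp [swapAt]

theorem mem_swap2Pairs_succ (hin : i + 3 ≤ n) :
    (L, L') ∈ swap2Pairs F N₀ n k p (i + 1) ↔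
      IsModificationChain F N₀ n k p L ∧ (∀ j, j ≠ i + 1 → j ≠ i + 2 → L j = L' j) ∧
        IsModification F (p (i + 3)) (k (i + 3)) (L i) (L' (i + 1)) ∧
        IsModification F (p (i + 2)) (k (i + 2)) (L' (i + 1)) (L' (i + 2)) ∧
        IsModification F (p (i + 1)) (k (i + 1)) (L' (i + 2)) (L (i + 3)) := by
  refine and_congr_right fun hL => and_comm.trans (and_congr_right fun hLL' => ?_)
  rw [hL.iff_of_eq_off (a := i) hin (fun j hj => hLL' j (by lia) (by lia))
    (fun j _ => by grind [swap2At]) (fun j _ => by grind [swap2At]),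
    show L i = L' i from hLL' i (by lia) (by lia),
    show L (i + 3) = L' (i + 3) from hLL' (i + 3) (by lia) (by lia)]
  have hIco : ∀ j, i ≤ j ∧ j < i + 3 ↔ j = i ∨ j = i + 1 ∨ j = i + 2 := by lia
  simp only [← and_imp, hIco, forall_eq_or_imp, forall_eq]
  simp [swap2At]

theorem IsModificationChain.isCoprimePart (hin : i + 3 ≤ n)
    (hc : IsCoprime (p (i + 1) * p (i + 2)) (p (i + 3)))
    (hL : IsModificationChain F N₀ n k p L) :
    IsCoprimePart (p (i + 1) * p (i + 2)) (p (i + 3)) (L i) (L (i + 3)) (L (i + 2)) :=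
  IsModification.isCoprimePart_snd hc (hL.isModification i (by lia))
    (hL.isModification (i + 1) (by lia)) (hL.isModification (i + 2) (by lia))

theorem isCoprimePart_of_mem_swap2Pairs (hin : i + 3 ≤ n)
    (hc : IsCoprime (p (i + 1) * p (i + 2)) (p (i + 3)))
    (h : (L, L') ∈ swap2Pairs F N₀ n k p (i + 1)) :
    IsCoprimePart (p (i + 3)) (p (i + 1) * p (i + 2)) (L i) (L (i + 3)) (L' (i + 1)) := by
  obtain ⟨-, -, h₁, h₂, h₃⟩ := (mem_swap2Pairs_succ hin).1 h
  rw [mul_comm] at hc ⊢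
  exact IsModification.isCoprimePart_fst hc.symm h₁ h₂ h₃

theorem torsionOver_eq_inf_of_mem_swap2Pairs (hin : i + 3 ≤ n)
    (hc : IsCoprime (p (i + 1) * p (i + 2)) (p (i + 3)))
    (h : (L, L') ∈ swap2Pairs F N₀ n k p (i + 1)) :
    torsionOver (p (i + 2)) (L i) (L' (i + 2)) = L (i + 2) ⊓ L' (i + 2) := by
  obtain ⟨hL, -, -, h₂, h₃⟩ := (mem_swap2Pairs_succ hin).1 h
  exact (hL.isCoprimePart hin hc).torsionOver_eq_inf (isCoprimePart_of_mem_swap2Pairs hin hc h)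
    (dvd_mul_left _ _) h₃.le h₂.smul_mem

theorem mapsTo_toSwapPair (hin : i + 3 ≤ n)
    (hc : IsCoprime (p (i + 1) * p (i + 2)) (p (i + 3))) :
    Set.MapsTo (toSwapPair p (i + 1)) (swap2Pairs F N₀ n k p (i + 1))
      (swapPairs F N₀ n k p (i + 1)) := by
  rintro ⟨L, L'⟩ h
  obtain ⟨hL, -, -, h₂, h₃⟩ := (mem_swap2Pairs_succ hin).1 h
  have hU := hL.isCoprimePart hin hc
  have hB := isCoprimePart_of_mem_swap2Pairs hin hc h
  have hinf : L (i + 2) ⊓ L' (i + 2) ⊓ L' (i + 1) = L i := by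
    rw [inf_assoc, inf_eq_right.2 h₂.le, hU.inf_eq hB]
  have hsup : L (i + 2) ⊔ L' (i + 2) = L (i + 3) := by
    rw [← sup_eq_right.2 h₂.le, ← sup_assoc, hU.sup_eq hB, sup_eq_left.2 h₃.le]
  refine (mem_swapPairs_succ (by lia)).2 ⟨hL, fun j hj => (Function.update_of_ne hj _ _).symm, ?_⟩
  simp only [Function.update_self, add_tsub_cancel_right, add_assoc, Nat.reduceAdd,
    torsionOver_eq_inf_of_mem_swap2Pairs hin hc h]
  exact ⟨(isModification_iff_of_inf_eq_of_sup_eq hinf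
      (hU.inf_left_sup_eq hB ⟨h₂.le, h₃.le⟩)).2 h₂,
    (isModification_iff_of_inf_eq_of_sup_eq rfl hsup).2 h₃⟩

theorem injOn_toSwapPair (hin : i + 3 ≤ n)
    (hc : IsCoprime (p (i + 1) * p (i + 2)) (p (i + 3))) :
    Set.InjOn (toSwapPair p (i + 1)) (swap2Pairs F N₀ n k p (i + 1)) := by
  rintro ⟨L, L'⟩ h ⟨Lc, Lc'⟩ hLc heq
  obtain ⟨rfl, hM⟩ := Prod.ext_iff.1 heq
  change (L, Lc') ∈ swap2Pairs F N₀ n k p (i + 1) at hLc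
  obtain ⟨hL, hLL', -, h₂, h₃⟩ := (mem_swap2Pairs_succ hin).1 h
  obtain ⟨-, hLLc', -, h₂', h₃'⟩ := (mem_swap2Pairs_succ hin).1 hLc
  have hU := hL.isCoprimePart hin hc
  have hB := isCoprimePart_of_mem_swap2Pairs hin hc h
  have hB' := isCoprimePart_of_mem_swap2Pairs hin hc hLc
  have hfst : L' (i + 1) = Lc' (i + 1) := hB.eq_torsionOver.trans hB'.eq_torsionOver.symm
  have hinf : L (i + 2) ⊓ L' (i + 2) = L (i + 2) ⊓ Lc' (i + 2) := by
    rw [← torsionOver_eq_inf_of_mem_swap2Pairs hin hc h,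
      ← torsionOver_eq_inf_of_mem_swap2Pairs hin hc hLc]
    simpa [toSwapPair] using congrFun hM (i + 1)
  have hsnd : L' (i + 2) = Lc' (i + 2) := by
    rw [← hU.inf_left_sup_eq hB ⟨h₂.le, h₃.le⟩, hinf, hfst,
      hU.inf_left_sup_eq hB' ⟨h₂'.le, h₃'.le⟩]
  refine Prod.ext rfl (funext fun j => ?_)
  by_cases h1 : j = i + 1
  · exact h1 ▸ hfst
  by_cases h2 : j = i + 2
  · exact h2 ▸ hsnd
  exact (hLL' j h1 h2).symm.trans (hLLc' j h1 h2)

theorem surjOn_toSwapPair (hin : i + 3 ≤ n)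
    (hc : IsCoprime (p (i + 1) * p (i + 2)) (p (i + 3))) :
    Set.SurjOn (toSwapPair p (i + 1)) (swap2Pairs F N₀ n k p (i + 1))
      (swapPairs F N₀ n k p (i + 1)) := by
  rintro ⟨L, M⟩ h
  obtain ⟨hL, hLM, h₂, h₁⟩ := (mem_swapPairs_succ (by lia)).1 h
  have hU := hL.isCoprimePart hin hc
  have hB := hU.compl_torsionOver
  set B := torsionOver (p (i + 3)) (L i) (L (i + 3))
  let L' := Function.update (Function.update L (i + 1) B) (i + 2) (M (i + 1) ⊔ B)
  have hL'₁ : L' (i + 1) = B := by simp [L']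
  have hL'₂ : L' (i + 2) = M (i + 1) ⊔ B := by simp [L']
  have hinf : L (i + 2) ⊓ (M (i + 1) ⊔ B) = M (i + 1) :=
    hU.inf_sup_right_eq hB ⟨h₂.le, h₁.le⟩
  have hinfB : M (i + 1) ⊓ B = L i := by
    rw [← inf_eq_left.2 h₁.le, inf_assoc, hU.inf_eq hB, inf_eq_right.2 h₂.le]
  have hsup : L (i + 2) ⊔ (M (i + 1) ⊔ B) = L (i + 3) := by
    rw [← sup_assoc, sup_eq_left.2 h₁.le, hU.sup_eq hB]
  have hLL' : (L, L') ∈ swap2Pairs F N₀ n k p (i + 1) := by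
    refine (mem_swap2Pairs_succ hin).2 ⟨hL, fun j h1 h2 => by simp [L', h1, h2], ?_⟩
    rw [hL'₁, hL'₂]
    exact ⟨(isModification_iff_of_inf_eq_of_sup_eq (hB.inf_eq hU) (hB.sup_eq hU)).2
        (hL.isModification (i + 2) (by lia)),
      (isModification_iff_of_inf_eq_of_sup_eq hinfB rfl).1 h₂,
      (isModification_iff_of_inf_eq_of_sup_eq hinf hsup).1 h₁⟩
  refine ⟨(L, L'), hLL', Prod.ext rfl (Function.update_eq_iff.2 ⟨?_, hLM⟩)⟩
  exact (torsionOver_eq_inf_of_mem_swap2Pairs hin hc hLL').trans (hL'₂ ▸ hinf)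

theorem statement10_general (hi : 1 ≤ i) (hin : i + 2 ≤ n) (h₁ : IsCoprime (p i) (p (i + 2)))
    (h₂ : IsCoprime (p (i + 1)) (p (i + 2))) :
    Set.BijOn (toSwapPair p i) (swap2Pairs F N₀ n k p i) (swapPairs F N₀ n k p i) := by
  obtain ⟨i, rfl⟩ := Nat.exists_eq_add_of_le' hi
  have hc := h₁.mul_left h₂
  exact ⟨mapsTo_toSwapPair hin hc, injOn_toSwapPair hin hc, surjOn_toSwapPair hin hc⟩

end Chains

theorem bijOn_prodMk_fst_iff {α β γ : Type*} {f : α → β → γ} {S : Set (α × β)} {T : Set (α × γ)} :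
    Set.BijOn (fun x : α × β => (x.1, f x.1 x.2)) S T ↔
      (∀ a b, (a, b) ∈ S → (a, f a b) ∈ T) ∧
      (∀ a b a' b', (a, b) ∈ S → (a', b') ∈ S → a = a' → f a b = f a' b' → b = b') ∧
      ∀ a c, (a, c) ∈ T → ∃ b, (a, b) ∈ S ∧ f a b = c := by
  refine and_congr ?_ (and_congr ?_ ?_)
  · simp only [Set.MapsTo, Prod.forall]
  · simp only [Set.InjOn, Prod.forall, Prod.mk.injEq]
    grind
  · simp only [Set.SurjOn, Set.subset_def, Set.mem_image, Prod.forall, Prod.exists, Prod.mk.injEq]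
    grind

section LatticeChains

variable {m n i : ℕ} {k : ℕ → ℕ} {w : ℕ → ℂ} {L L' : ℕ → SubM m}

theorem swapAt_comp {α β : Type*} (f : α → β) (i : ℕ) (g : ℕ → α) :
    swapAt i (fun j => f (g j)) = fun j => f (swapAt i g j) := by
  grind [swapAt]

theorem swap2At_comp {α β : Type*} (f : α → β) (i : ℕ) (g : ℕ → α) :
    swap2At i (fun j => f (g j)) = fun j => f (swap2At i g j) := by
  grind [swap2At]

theorem isYChain_iff : IsYChain m n k w L ↔
    IsModificationChain ℂ (polyL0 m) n k (fun j => X - C (w j)) L :=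
  ⟨fun ⟨h0, hle, hfin, hdim, hmul⟩ =>
      ⟨h0, fun j hj => ⟨hle j hj, hmul j hj, hfin j hj, hdim j hj⟩⟩,
    fun ⟨h0, h⟩ => ⟨h0, fun j hj => (h j hj).le, fun j hj => (h j hj).finite,
      fun j hj => (h j hj).finrank_eq, fun j hj => (h j hj).smul_mem⟩⟩

theorem isZPair_iff : IsZPair m n i k w L L' ↔
    (L, L') ∈ swapPairs ℂ (polyL0 m) n k (fun j => X - C (w j)) i := by
  rw [IsZPair, isYChain_iff, isYChain_iff, ← swapAt_comp fun c => X - C c]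
  rfl

theorem isZBigPair_iff : IsZBigPair m n i k w L L' ↔
    (L, L') ∈ swap2Pairs ℂ (polyL0 m) n k (fun j => X - C (w j)) i := by
  rw [IsZBigPair, isYChain_iff, isYChain_iff, ← swap2At_comp fun c => X - C c]
  rfl

theorem toSwapPair_eq_tChain (hww : w i = w (i + 1)) :
    toSwapPair (fun j => X - C (w j)) i =
      fun x : (ℕ → SubM m) × (ℕ → SubM m) => (x.1, tChain m i w x.1 x.2) := by
  refine funext fun x => Prod.ext rfl (funext fun j => ?_)
  simp only [toSwapPair, Function.update_apply, tChain, ← hww]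
  rfl

end LatticeChains

/-- when `w_i = w_{i+1}` and `w_i ≠ w_{i+2}`, the map
`((L),(L')) ↦ ((L),(M))` with `M_j = L_j` for `j ≠ i` and
`M_i = {x ∈ L'_{i+1} : (z-w_i)·x ∈ L_{i-1}}` is a well-defined bijection from `Z`
onto `Z(k)^i_w`. -/
theorem statement10 (m : ℕ) (hm : 2 ≤ m) (n : ℕ) (k : ℕ → ℕ) (w : ℕ → ℂ)
    (hk : ∀ j, 1 ≤ j → j ≤ n → 1 ≤ k j ∧ k j ≤ m - 1)
    (i : ℕ) (hi : 1 ≤ i) (hin : i + 2 ≤ n)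
    (hww : w i = w (i + 1)) (hw2 : w i ≠ w (i + 2)) :
    -- the map is well defined
    (∀ L L' : ℕ → SubM m, IsZBigPair m n i k w L L' →
        IsZPair m n i k w L (tChain m i w L L')) ∧
    -- the map is injective
    (∀ L L' Lc L'c : ℕ → SubM m, IsZBigPair m n i k w L L' →
        IsZBigPair m n i k w Lc L'c → L = Lc →
        tChain m i w L L' = tChain m i w Lc L'c → L' = L'c) ∧
    -- the map is onto Z(k)^i_w
    (∀ L M : ℕ → SubM m, IsZPair m n i k w L M →
        ∃ L' : ℕ → SubM m, IsZBigPair m n i k w L L' ∧ tChain m i w L L' = M) := by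
  have hcop : IsCoprime (X - C (w i)) (X - C (w (i + 2))) :=
    isCoprime_X_sub_C_of_isUnit_sub (sub_ne_zero.2 hw2).isUnit
  have hbij := statement10_general (F := ℂ) (N₀ := polyL0 m) (k := k) (p := fun j => X - C (w j))
    hi hin hcop (hww ▸ hcop)
  rw [toSwapPair_eq_tChain hww, bijOn_prodMk_fst_iff] at hbij
  simpa only [isZPair_iff, isZBigPair_iff] using hbij
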